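/- Let G be a finite simple graph and let M be a maximum matching in G. If for all edges uv ∈ E(G) and all u', v' with uu' ∈ M and vv' ∈ M one has u'v' ∈ E(G), then Max(G) = Min(G) = α'(G). -/

import Mathlib

/-!
The value of the game never exceeds the matching number, because the moves played form a matching
(`exists_matchIn_gameValue`). For the lower bound, call a position `s` with a matching `M` *good*
if `M` is a maximum matching of `G[s]` satisfying the exchange condition. In a good position the
optimal value is at least `|M|` (`GoodPos.le_gameValue`), by induction on `s`:

* On Max's turn, Max plays an edge of `M`; what is left of `M` is good for the new position.
* When Min plays `uv` with `uu'` and `vv'` distinct edges of `M`, the exchange condition lets Max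
  answer `u'v'`. Two moves have been made and `M` has lost exactly two edges.
* When Min plays any other `uv`, some edge of `M` meets `{u, v}` by maximality, and only one does.
  One move has been made and `M` has lost exactly one edge.

In each case the remaining part of `M` is again maximum, since a larger matching of the new
position, extended by the edges just played, would be a matching of `G[s]` larger than `M`.
-/

open Finset

variable {V : Type*} [DecidableEq V]

/-- The legal moves in the matching game on `G` when the set of remaining
(undeleted) vertices is `s`: ordered pairs of adjacent remaining vertices. -/
def matchPlays (G : SimpleGraph V) [DecidableRel G.Adj] (s : Finset V) :
    Finset (V × V) :=
  (s ×ˢ s).filter fun p => G.Adj p.1 p.2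

lemma matchPlays_card {G : SimpleGraph V} [DecidableRel G.Adj] {s : Finset V}
    {p : V × V} (hp : p ∈ matchPlays G s) :
    (s \ {p.1, p.2}).card < s.card := by
  simp only [matchPlays, mem_filter, mem_product] at hp
  refine card_lt_card (Finset.sdiff_ssubset ?_ ⟨p.1, mem_insert_self _ _⟩)
  intro x hx
  rcases mem_insert.mp hx with h | h
  · exact h ▸ hp.1.1
  · exact (mem_singleton.mp h) ▸ hp.1.2

/-- The value of the matching game on the subgraph of `G` induced by the vertex
set `s`, with Max to move if `maxTurn = true` and Min to move otherwise:
the number of *further* edges added to the matching under optimal play. -/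
def gameValue (G : SimpleGraph V) [DecidableRel G.Adj] (maxTurn : Bool)
    (s : Finset V) : ℕ :=
  if h : (matchPlays G s).Nonempty then
    if maxTurn then
      (matchPlays G s).attach.sup
        fun p => 1 + gameValue G false (s \ {p.1.1, p.1.2})
    else
      (matchPlays G s).attach.inf' (by simpa using h)
        fun p => 1 + gameValue G true (s \ {p.1.1, p.1.2})
  else 0
termination_by s.card
decreasing_by
  · exact matchPlays_card p.2
  · exact matchPlays_card p.2

/-- The Max-start game matching number `Max(G)`. -/
noncomputable def gameMax [Fintype V] (G : SimpleGraph V) : ℕ :=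
  letI : DecidableRel G.Adj := Classical.decRel _
  gameValue G true Finset.univ

/-- The Min-start game matching number `Min(G)`. -/
noncomputable def gameMin [Fintype V] (G : SimpleGraph V) : ℕ :=
  letI : DecidableRel G.Adj := Classical.decRel _
  gameValue G false Finset.univ

/-- `M` is a matching in `G`: a set of edges of `G` that are pairwise
vertex-disjoint. -/
def IsMatchingSet (G : SimpleGraph V) (M : Finset (Sym2 V)) : Prop :=
  (∀ e ∈ M, e ∈ G.edgeSet) ∧
    ∀ e ∈ M, ∀ f ∈ M, e ≠ f → ∀ v : V, v ∈ e → v ∉ f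

/-- The matching number `α'(G)`: the maximum size of a matching in `G`. -/
noncomputable def matchingNumber (G : SimpleGraph V) : ℕ :=
  sSup {n | ∃ M : Finset (Sym2 V), IsMatchingSet G M ∧ M.card = n}

/-- `M` is a matching of the subgraph of `G` induced by `s`. -/
def MatchIn (G : SimpleGraph V) (s : Finset V) (M : Finset (Sym2 V)) : Prop :=
  IsMatchingSet G M ∧ ∀ e ∈ M, ∀ v ∈ e, v ∈ s

/-- `M` is a maximum matching of the subgraph of `G` induced by `s`, and `M` satisfies the exchange
condition: partners of adjacent matched vertices are adjacent. -/
structure GoodPos (G : SimpleGraph V) (s : Finset V) (M : Finset (Sym2 V)) : Prop where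
  matchIn : MatchIn G s M
  isMax : ∀ N, MatchIn G s N → N.card ≤ M.card
  exch : ∀ u v u' v' : V, G.Adj u v → s(u, u') ∈ M → s(v, v') ∈ M → G.Adj u' v'

lemma mem_matchPlays {G : SimpleGraph V} [DecidableRel G.Adj] {s : Finset V} {p : V × V} :
    p ∈ matchPlays G s ↔ (p.1 ∈ s ∧ p.2 ∈ s) ∧ G.Adj p.1 p.2 := by
  simp [matchPlays]

lemma MatchIn.insert_edge {G : SimpleGraph V} {s : Finset V} {N : Finset (Sym2 V)} {u v : V}
    (hN : MatchIn G (s \ {u, v}) N) (hu : u ∈ s) (hv : v ∈ s) (huv : G.Adj u v) :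
    ∃ N', MatchIn G s N' ∧ N'.card = N.card + 1 := by
  obtain ⟨⟨h1, h2⟩, h3⟩ := hN
  have hdis : ∀ e ∈ N, ∀ x ∈ e, x ≠ u ∧ x ≠ v := by
    intro e he x hx
    have := h3 e he x hx
    simp only [mem_sdiff, mem_insert, mem_singleton, not_or] at this
    exact this.2
  refine ⟨insert s(u, v) N, ⟨⟨?_, ?_⟩, ?_⟩, ?_⟩
  · intro e he
    rcases mem_insert.mp he with rfl | he
    · exact huv
    · exact h1 e he
  · intro e he f hf hef x hxe hxf
    rcases mem_insert.mp he with rfl | he <;> rcases mem_insert.mp hf with rfl | hf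
    · exact hef rfl
    · have := hdis f hf x hxf
      rcases Sym2.mem_iff.mp hxe with h | h
      · exact this.1 h
      · exact this.2 h
    · have := hdis e he x hxe
      rcases Sym2.mem_iff.mp hxf with h | h
      · exact this.1 h
      · exact this.2 h
    · exact h2 e he f hf hef x hxe hxf
  · intro e he x hx
    rcases mem_insert.mp he with rfl | he
    · rcases Sym2.mem_iff.mp hx with rfl | rfl
      · exact hu
      · exact hv
    · exact (mem_sdiff.mp (h3 e he x hx)).1
  · refine card_insert_of_notMem fun h => ?_
    exact (hdis _ h u (Sym2.mem_mk_left u v)).1 rfl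

lemma MatchIn.mono_erase {G : SimpleGraph V} {s t : Finset V} {M M' : Finset (Sym2 V)}
    (hM : MatchIn G s M) (hsub : M' ⊆ M) (ht : ∀ e ∈ M', ∀ v ∈ e, v ∈ t) : MatchIn G t M' :=
  ⟨⟨fun e he => hM.1.1 e (hsub he), fun e he f hf => hM.1.2 e (hsub he) f (hsub hf)⟩, ht⟩

/-- If `e` is the only edge of `M` meeting the move `uv`, removing `e` from `M` leaves a good
position. -/
lemma GoodPos.step {G : SimpleGraph V} {s : Finset V} {M : Finset (Sym2 V)} (h : GoodPos G s M)
    {u v : V} (hu : u ∈ s) (hv : v ∈ s) (huv : G.Adj u v) {e : Sym2 V} (he : e ∈ M)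
    (honly : ∀ f ∈ M, (u ∈ f ∨ v ∈ f) → f = e) : GoodPos G (s \ {u, v}) (M.erase e) := by
  refine ⟨h.matchIn.mono_erase (erase_subset _ _) ?_, ?_, ?_⟩
  · intro f hf x hx
    obtain ⟨hne, hf⟩ := mem_erase.mp hf
    simp only [mem_sdiff, mem_insert, mem_singleton]
    refine ⟨h.matchIn.2 f hf x hx, ?_⟩
    rintro (rfl | rfl)
    · exact hne (honly f hf (Or.inl hx))
    · exact hne (honly f hf (Or.inr hx))
  · intro N hN
    obtain ⟨N', hN', hc⟩ := hN.insert_edge hu hv huv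
    have := h.isMax N' hN'
    have := card_erase_add_one he
    omega
  · intro a b a' b' hab ha hb
    exact h.exch a b a' b' hab (mem_of_mem_erase ha) (mem_of_mem_erase hb)

/-- After the move `uv` and the answer `u'v'`, where `uu'` and `vv'` are distinct edges of `M`,
the position is good for `M` without these two edges. -/
lemma GoodPos.double_step {G : SimpleGraph V} {s : Finset V} {M : Finset (Sym2 V)}
    (h : GoodPos G s M) {u v u' v' : V} (hu : u ∈ s) (hv : v ∈ s) (huv : G.Adj u v)
    (he : s(u, u') ∈ M) (hf : s(v, v') ∈ M) (hne : s(u, u') ≠ s(v, v')) :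
    (u' ∈ s \ {u, v} ∧ v' ∈ s \ {u, v}) ∧ G.Adj u' v' ∧
      GoodPos G ((s \ {u, v}) \ {u', v'}) ((M.erase s(u, u')).erase s(v, v')) := by
  have hdis := h.matchIn.1.2
  have huu' : u ≠ u' := (show G.Adj u u' from h.matchIn.1.1 _ he).ne
  have hvv' : v ≠ v' := (show G.Adj v v' from h.matchIn.1.1 _ hf).ne
  have hu'v : u' ≠ v := by
    rintro rfl
    exact hdis _ he _ hf hne u' (by simp) (by simp)
  have hv'u : v' ≠ u := by
    rintro rfl
    exact hdis _ he _ hf hne v' (by simp) (by simp)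
  have hadj : G.Adj u' v' := h.exch u v u' v' huv he hf
  have hu' : u' ∈ s \ {u, v} := by
    simpa [huu'.symm, hu'v] using h.matchIn.2 _ he u' (by simp)
  have hv' : v' ∈ s \ {u, v} := by
    simpa [hvv'.symm, hv'u] using h.matchIn.2 _ hf v' (by simp)
  have hsub : (M.erase s(u, u')).erase s(v, v') ⊆ M :=
    (erase_subset _ _).trans (erase_subset _ _)
  refine ⟨⟨hu', hv'⟩, hadj, h.matchIn.mono_erase hsub ?_, ?_, ?_⟩
  · intro g hg x hx
    obtain ⟨hgf, hg⟩ := mem_erase.mp hg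
    obtain ⟨hge, hg⟩ := mem_erase.mp hg
    have h1 := hdis _ hg _ he hge x hx
    have h2 := hdis _ hg _ hf hgf x hx
    simp only [Sym2.mem_iff, not_or] at h1 h2
    simp [h1, h2, h.matchIn.2 _ hg x hx]
  · intro N hN
    obtain ⟨N₁, hN₁, hc₁⟩ := hN.insert_edge hu' hv' hadj
    obtain ⟨N₂, hN₂, hc₂⟩ := hN₁.insert_edge hu hv huv
    have := h.isMax N₂ hN₂
    have := card_erase_add_one he
    have := card_erase_add_one (mem_erase.mpr ⟨hne.symm, hf⟩)
    omega
  · intro a b a' b' hab ha hb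
    exact h.exch a b a' b' hab (hsub ha) (hsub hb)

lemma le_gameValue_true {G : SimpleGraph V} [DecidableRel G.Adj] {s : Finset V} {u v : V}
    (hu : u ∈ s) (hv : v ∈ s) (huv : G.Adj u v) :
    1 + gameValue G false (s \ {u, v}) ≤ gameValue G true s := by
  have hp : (u, v) ∈ matchPlays G s := mem_matchPlays.mpr ⟨⟨hu, hv⟩, huv⟩
  conv_rhs => rw [gameValue]
  rw [dif_pos ⟨_, hp⟩, if_pos rfl]
  exact Finset.le_sup (f := fun p : {x // x ∈ matchPlays G s} =>
    1 + gameValue G false (s \ {p.1.1, p.1.2})) (mem_attach _ ⟨(u, v), hp⟩)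

/-- Unless the game is over, its value is attained by some move. -/
lemma exists_gameValue_eq {G : SimpleGraph V} [DecidableRel G.Adj] (b : Bool) {s : Finset V}
    (h : (matchPlays G s).Nonempty) : ∃ u v, u ∈ s ∧ v ∈ s ∧ G.Adj u v ∧
      gameValue G b s = 1 + gameValue G (!b) (s \ {u, v}) := by
  have h' : (matchPlays G s).attach.Nonempty := by simpa using h
  rw [gameValue, dif_pos h]
  cases b
  · obtain ⟨p, -, hp⟩ := Finset.exists_mem_eq_inf' h'
      fun p => 1 + gameValue G true (s \ {p.1.1, p.1.2})
    obtain ⟨⟨h1, h2⟩, h3⟩ := mem_matchPlays.mp p.2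
    exact ⟨_, _, h1, h2, h3, hp⟩
  · obtain ⟨p, -, hp⟩ := Finset.exists_mem_eq_sup _ h'
      fun p => 1 + gameValue G false (s \ {p.1.1, p.1.2})
    obtain ⟨⟨h1, h2⟩, h3⟩ := mem_matchPlays.mp p.2
    exact ⟨_, _, h1, h2, h3, hp⟩

/-- The edges chosen under optimal play form a matching whose size is the value of the game. -/
lemma exists_matchIn_gameValue (G : SimpleGraph V) [DecidableRel G.Adj] (b : Bool) (s : Finset V) :
    ∃ N, MatchIn G s N ∧ N.card = gameValue G b s := by
  induction s using Finset.strongInduction generalizing b with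
  | H s ih =>
    by_cases h : (matchPlays G s).Nonempty
    · obtain ⟨u, v, hu, hv, huv, hval⟩ := exists_gameValue_eq b h
      have hlt : s \ {u, v} ⊂ s :=
        ssubset_of_subset_of_ne sdiff_subset fun h => by
          have := h.symm ▸ hu
          simp at this
      obtain ⟨N, hN, hc⟩ := ih _ hlt (!b)
      obtain ⟨N', hN', hc'⟩ := hN.insert_edge hu hv huv
      exact ⟨N', hN', by omega⟩
    · refine ⟨∅, ⟨⟨by simp, by simp⟩, by simp⟩, ?_⟩
      rw [gameValue, dif_neg h]
      rfl

lemma GoodPos.le_gameValue {G : SimpleGraph V} [DecidableRel G.Adj] (b : Bool) {s : Finset V}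
    {M : Finset (Sym2 V)} (h : GoodPos G s M) : M.card ≤ gameValue G b s := by
  induction s using Finset.strongInduction generalizing b M with
  | H s ih =>
    have hlt : ∀ u v, u ∈ s → s \ {u, v} ⊂ s := fun u v hu =>
      ssubset_of_subset_of_ne sdiff_subset fun h => by
        have := h.symm ▸ hu
        simp at this
    rcases M.eq_empty_or_nonempty with rfl | ⟨e₀, he₀⟩
    · simp
    induction e₀ using Sym2.ind with | _ x y =>
    have hx := h.matchIn.2 _ he₀ x (by simp)
    have hy := h.matchIn.2 _ he₀ y (by simp)
    have hxy : G.Adj x y := h.matchIn.1.1 _ he₀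
    cases b
    · obtain ⟨u, v, hu, hv, huv, hval⟩ :=
        exists_gameValue_eq false (s := s) ⟨(x, y), mem_matchPlays.mpr ⟨⟨hx, hy⟩, hxy⟩⟩
      rw [hval]
      by_cases hd : ∃ e ∈ M, ∃ f ∈ M, e ≠ f ∧ u ∈ e ∧ v ∈ f
      · obtain ⟨e, he, f, hf, hne, ⟨u', rfl⟩, ⟨v', rfl⟩⟩ := hd
        obtain ⟨⟨hu', hv'⟩, hadj, hgood⟩ := h.double_step hu hv huv he hf hne
        have h1 := ih _ (sdiff_subset.trans_ssubset (hlt u v hu)) false hgood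
        have h2 := le_gameValue_true hu' hv' hadj
        have := card_erase_add_one he
        have := card_erase_add_one (mem_erase.mpr ⟨hne.symm, hf⟩)
        simp only [Bool.not_false]
        omega
      · -- Some edge of `M` meets `{u, v}`; otherwise `M` could be enlarged by `uv`.
        have hex : ∃ e ∈ M, u ∈ e ∨ v ∈ e := by
          by_contra! hno
          have hM' : MatchIn G (s \ {u, v}) M :=
            h.matchIn.mono_erase (Subset.refl _) fun e he z hz => by
              simp only [mem_sdiff, mem_insert, mem_singleton]
              refine ⟨h.matchIn.2 e he z hz, ?_⟩
              rintro (rfl | rfl)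
              · exact (hno e he).1 hz
              · exact (hno e he).2 hz
          obtain ⟨N', hN', hc⟩ := hM'.insert_edge hu hv huv
          have := h.isMax N' hN'
          omega
        obtain ⟨e, he, hue⟩ := hex
        have honly : ∀ f ∈ M, (u ∈ f ∨ v ∈ f) → f = e := by
          intro f hf huf
          by_contra hfe
          rcases hue with hue | hue <;> rcases huf with huf | huf
          · exact h.matchIn.1.2 f hf e he hfe u huf hue
          · exact hd ⟨e, he, f, hf, Ne.symm hfe, hue, huf⟩
          · exact hd ⟨f, hf, e, he, hfe, huf, hue⟩
          · exact h.matchIn.1.2 f hf e he hfe v huf hue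
        have h1 := ih _ (hlt u v hu) true (h.step hu hv huv he honly)
        have := card_erase_add_one he
        simp only [Bool.not_false]
        omega
    · have hgood := h.step hx hy hxy he₀ fun f hf hmem => by
        by_contra hfe
        rcases hmem with hz | hz
        · exact h.matchIn.1.2 f hf _ he₀ hfe x hz (by simp)
        · exact h.matchIn.1.2 f hf _ he₀ hfe y hz (by simp)
      have h1 := ih _ (hlt x y hx) false hgood
      have h2 := le_gameValue_true hx hy hxy
      have := card_erase_add_one he₀
      omega

/-- if `M` is a maximum matching in `G` such that whenever
`uv ∈ E(G)` and `uu', vv' ∈ M` one has `u'v' ∈ E(G)`, then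
`Max(G) = Min(G) = α'(G)`. -/
theorem stmt4 {V : Type*} [Fintype V] [DecidableEq V] (G : SimpleGraph V)
    (M : Finset (Sym2 V)) (hM : IsMatchingSet G M)
    (hmax : M.card = matchingNumber G)
    (hcond : ∀ u v u' v' : V, G.Adj u v → s(u, u') ∈ M → s(v, v') ∈ M →
      G.Adj u' v') :
    gameMax G = matchingNumber G ∧ gameMin G = matchingNumber G := by
  have hle : ∀ N, MatchIn G univ N → N.card ≤ M.card := by
    intro N hN
    rw [hmax]
    -- The bound makes the supremum in `matchingNumber` a genuine one.
    refine le_csSup ⟨Fintype.card (Sym2 V), ?_⟩ ⟨N, hN.1, rfl⟩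
    rintro n ⟨N', -, rfl⟩
    exact card_le_univ N'
  have hgood : GoodPos G univ M := ⟨⟨hM, by simp⟩, hle, hcond⟩
  letI : DecidableRel G.Adj := Classical.decRel _
  have key : ∀ b, gameValue G b univ = matchingNumber G := by
    intro b
    obtain ⟨N, hN, hc⟩ := exists_matchIn_gameValue G b univ
    rw [← hmax]
    exact le_antisymm (hc ▸ hle N hN) (hgood.le_gameValue b)
  exact ⟨key true, key false⟩
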